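/- For λ ∈ ℂ define operators ρ_λ(Z) on V for the eight basis elements Z of sl(3,ℂ) by: ρ_λ(f1) = −∂_x, ρ_λ(f2) = −∂_y, ρ_λ(e) = −y∂_x − (i/2)q², ρ_λ(h) = −x∂_x + y∂_y + q∂_q + 1/2, ρ_λ(f) = −x∂_y − (i/2)∂_q², ρ_λ(h0) = (3/2)(x∂_x + y∂_y) + λ + 3/2, ρ_λ(e1) = x(x∂_x + y∂_y + λ + 3/2) − (1/2)x(q∂_q + 1/2) + (i/2)y∂_q², ρ_λ(e2) = y(x∂_x + y∂_y + λ + 3/2) + (1/2)y(q∂_q + 1/2) + (i/2)x q². Then the symplectic Dirac operator D_s = i q ∂_y − ∂_x ∂_q intertwines the λ = −3/4 and λ = 3/4 families: D_s ∘ ρ_{−3/4}(Z) = ρ_{3/4}(Z) ∘ D_s for each of the eight basis elements Z ∈ {f1, f2, e, h, f, h0, e1, e2}. -/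

import Mathlib

open MvPolynomial Complex

noncomputable section

/-- The space of complex polynomials in three variables `x = X 0`, `y = X 1`, `q = X 2`. -/
abbrev V : Type := MvPolynomial (Fin 3) ℂ

/-- Partial derivative `∂_x`. -/
def Dx : Module.End ℂ V := (pderiv (0 : Fin 3)).toLinearMap
/-- Partial derivative `∂_y`. -/
def Dy : Module.End ℂ V := (pderiv (1 : Fin 3)).toLinearMap
/-- Partial derivative `∂_q`. -/
def Dq : Module.End ℂ V := (pderiv (2 : Fin 3)).toLinearMap
/-- Multiplication by `x`. -/
def Mx : Module.End ℂ V := LinearMap.mulLeft ℂ (X 0)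
/-- Multiplication by `y`. -/
def My : Module.End ℂ V := LinearMap.mulLeft ℂ (X 1)
/-- Multiplication by `q`. -/
def Mq : Module.End ℂ V := LinearMap.mulLeft ℂ (X 2)

/-- `X = -y ∂_x - (i/2) q²`. -/
def opX : Module.End ℂ V := -(My * Dx) - (I / 2) • (Mq * Mq)
/-- `H = -x ∂_x + y ∂_y + q ∂_q + 1/2`. -/
def opH : Module.End ℂ V := -(Mx * Dx) + My * Dy + Mq * Dq + (1 / 2 : ℂ) • 1
/-- `Y = -x ∂_y - (i/2) ∂_q²`. -/
def opY : Module.End ℂ V := -(Mx * Dy) - (I / 2) • (Dq * Dq)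
/-- `E = x ∂_x + y ∂_y + 1/2`. -/
def opE : Module.End ℂ V := Mx * Dx + My * Dy + (1 / 2 : ℂ) • 1
/-- The symplectic Dirac operator `D_s = i q ∂_y - ∂_x ∂_q`. -/
def Ds : Module.End ℂ V := I • (Mq * Dy) - Dx * Dq
/-- `X_s = y ∂_q + i x q`. -/
def Xs : Module.End ℂ V := My * Dq + I • (Mx * Mq)
/-- `O1 = x² ∂_x + x y ∂_y - (1/2) x q ∂_q + (i/2) y ∂_q² + (1/2) x`. -/
def opO1 : Module.End ℂ V :=
  Mx * Mx * Dx + Mx * My * Dy - (1 / 2 : ℂ) • (Mx * Mq * Dq) + (I / 2) • (My * Dq * Dq)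
    + (1 / 2 : ℂ) • Mx
/-- `O2 = x y ∂_x + y² ∂_y + (1/2) y q ∂_q + (i/2) x q² + y`. -/
def opO2 : Module.End ℂ V :=
  Mx * My * Dx + My * My * Dy + (1 / 2 : ℂ) • (My * Mq * Dq) + (I / 2) • (Mx * Mq * Mq) + My

/-- `ρ_λ(h0) = (3/2)(x∂_x + y∂_y) + λ + 3/2`. -/
def rho_h0 (l : ℂ) : Module.End ℂ V := (3 / 2 : ℂ) • (Mx * Dx + My * Dy) + (l + 3 / 2) • 1

/-- `ρ_λ(e1) = x(x∂_x + y∂_y + λ + 3/2) - (1/2)x(q∂_q + 1/2) + (i/2)y∂_q²`. -/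
def rho_e1 (l : ℂ) : Module.End ℂ V :=
  Mx * (Mx * Dx + My * Dy + (l + 3 / 2) • 1)
    - (1 / 2 : ℂ) • (Mx * (Mq * Dq + (1 / 2 : ℂ) • 1)) + (I / 2) • (My * (Dq * Dq))

/-- `ρ_λ(e2) = y(x∂_x + y∂_y + λ + 3/2) + (1/2)y(q∂_q + 1/2) + (i/2)xq²`. -/
def rho_e2 (l : ℂ) : Module.End ℂ V :=
  My * (Mx * Dx + My * Dy + (l + 3 / 2) • 1)
    + (1 / 2 : ℂ) • (My * (Mq * Dq + (1 / 2 : ℂ) • 1)) + (I / 2) • (Mx * (Mq * Mq))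

/-!
Only the canonical commutation relations matter, so the identities hold in every `ℂ`-algebra
containing elements that satisfy them. The operators `D_s`, `X_s = y∂_q + ixq` and
`𝔼 = x∂_x + y∂_y + 1` satisfy `[D_s, 𝔼] = D_s` and `[D_s, X_s] = -i𝔼`, and
`ρ_λ(e1) = x𝔼 + (i/2)∂_q X_s + (λ + 3/4)x`, `ρ_λ(e2) = y𝔼 + (1/2)q X_s + (λ + 3/4)y`,
`ρ_λ(h0) = (3/2)𝔼 + λ`. Hence, for `λ = -3/4`, the commutator of `D_s` with `ρ_λ(Z)` is
`(3/2)m D_s`, where `m = x, y, 1` respectively, and this is exactly compensated by the term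
`(3/2)m` that `ρ_λ(Z)` gains when `λ` moves from `-3/4` to `3/4`.
-/

theorem lie_mul_right {A : Type*} [NonUnitalRing A] (a b c : A) :
    ⁅a, b * c⁆ = ⁅a, b⁆ * c + b * ⁅a, c⁆ := by
  simp only [Ring.lie_def, sub_mul, mul_sub, mul_assoc]
  abel

theorem lie_one_right {A : Type*} [Ring A] (a : A) : ⁅a, (1 : A)⁆ = 0 :=
  (Commute.one_right a).lie_eq

theorem lie_mul_left {A : Type*} [NonUnitalRing A] (a b c : A) :
    ⁅a * b, c⁆ = a * ⁅b, c⁆ + ⁅a, c⁆ * b := by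
  simp only [Ring.lie_def, sub_mul, mul_sub, mul_assoc]
  abel

theorem semiconjBy_add_iff_lie_eq {A : Type*} [NonUnitalNonAssocRing A] {a b c : A} :
    SemiconjBy a b (b + c) ↔ ⁅a, b⁆ = c * a := by
  rw [SemiconjBy, Ring.lie_def, sub_eq_iff_eq_add', add_mul]

theorem lie_derivation_mulLeft {R A : Type*} [CommRing R] [CommRing A] [Algebra R A]
    (D : Derivation R A A) (a : A) :
    ⁅D.toLinearMap, LinearMap.mulLeft R a⁆ = LinearMap.mulLeft R (D a) := by
  ext b
  simp [Ring.lie_def, mul_comm]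

theorem lie_pderiv_pderiv {R σ : Type*} [CommRing R] (i j : σ) :
    ⁅pderiv (R := R) i, pderiv (R := R) j⁆ = 0 := by
  classical
  refine derivation_ext fun k ↦ ?_
  rw [Derivation.commutator_apply]
  simp [pderiv_X, Pi.single_apply, apply_ite]

/-- The canonical commutation relations, which define the Weyl algebra: `x i` plays the role of the
multiplication by the `i`-th coordinate and `d i` that of the `i`-th partial derivative. -/
structure IsWeylFamily {ι A : Type*} [DecidableEq ι] [Ring A] (x d : ι → A) : Prop where
  lie_x_x (i j : ι) : ⁅x i, x j⁆ = 0
  lie_d_d (i j : ι) : ⁅d i, d j⁆ = 0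
  lie_d_x (i j : ι) : ⁅d i, x j⁆ = if i = j then 1 else 0

theorem isWeylFamily_mvPolynomial (R σ : Type*) [CommRing R] [DecidableEq σ] :
    IsWeylFamily (fun i : σ ↦ LinearMap.mulLeft R (X i : MvPolynomial σ R))
      (fun i ↦ (pderiv i).toLinearMap) where
  lie_x_x i j := ((Commute.all (X i) (X j)).map (Algebra.lmul R (MvPolynomial σ R))).lie_eq
  lie_d_d i j := by
    rw [← Derivation.commutator_coe_linear_map, lie_pderiv_pderiv, Derivation.coe_zero_linearMap]
  lie_d_x i j := by
    rw [lie_derivation_mulLeft]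
    split_ifs with h
    · rw [h, pderiv_X_self, LinearMap.mulLeft_one, Module.End.one_eq_id]
    · rw [pderiv_X_of_ne (Ne.symm h), LinearMap.mulLeft_zero_eq_zero]

namespace IsWeylFamily

variable {ι A : Type*} [DecidableEq ι] [Ring A] {x d : ι → A} (h : IsWeylFamily x d)
include h

theorem x_mul_comm (i j : ι) : x i * x j = x j * x i := commute_iff_lie_eq.mpr (h.lie_x_x i j)

theorem d_mul_comm (i j : ι) : d i * d j = d j * d i := commute_iff_lie_eq.mpr (h.lie_d_d i j)

theorem d_mul_x (i j : ι) : d i * x j = x j * d i + if i = j then 1 else 0 :=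
  sub_eq_iff_eq_add'.mp (h.lie_d_x i j)

theorem x_left_comm (i j : ι) (a : A) : x i * (x j * a) = x j * (x i * a) := by
  rw [← mul_assoc, h.x_mul_comm, mul_assoc]

theorem d_mul_x_mul (i j : ι) (a : A) :
    d i * (x j * a) = x j * (d i * a) + (if i = j then 1 else 0) * a := by
  rw [← mul_assoc, h.d_mul_x, add_mul, mul_assoc]

theorem lie_x_d (i j : ι) : ⁅x i, d j⁆ = -if j = i then 1 else 0 := by
  rw [← h.lie_d_x, Ring.lie_def, Ring.lie_def, neg_sub]

end IsWeylFamily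

section Operators

variable {A : Type*} [Ring A] [Algebra ℂ A] (x d : Fin 3 → A)

/-- The symplectic Dirac operator `D_s = i q ∂_y - ∂_x ∂_q`, where the indices `0, 1, 2` stand for
the coordinates `x, y, q`. -/
def symplecticDirac : A := I • (x 2 * d 1) - d 0 * d 2

/-- `X_s = y ∂_q + i x q`, the opposite of the symplectic Dirac operator in an `sl₂`-triple. -/
def symplecticDiracDual : A := x 1 * d 2 + I • (x 0 * x 2)

/-- The Euler operator in `x, y`, shifted to `x ∂_x + y ∂_y + 1` so as to be the neutral element of
the `sl₂`-triple of `D_s` and `X_s`. -/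
def shiftedEuler : A := x 0 * d 0 + x 1 * d 1 + 1

/-- `ρ_λ(e)`, which does not depend on `λ`. -/
def rhoE : A := -(x 1 * d 0) - (I / 2) • (x 2 * x 2)

/-- `ρ_λ(h)`, which does not depend on `λ`. -/
def rhoH : A := -(x 0 * d 0) + x 1 * d 1 + x 2 * d 2 + (1 / 2 : ℂ) • 1

/-- `ρ_λ(f)`, which does not depend on `λ`. -/
def rhoF : A := -(x 0 * d 1) - (I / 2) • (d 2 * d 2)

/-- `ρ_λ(h0)`. -/
def rhoH0 (l : ℂ) : A := (3 / 2 : ℂ) • (x 0 * d 0 + x 1 * d 1) + (l + 3 / 2) • 1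

/-- `ρ_λ(e1)`. -/
def rhoE1 (l : ℂ) : A :=
  x 0 * (x 0 * d 0 + x 1 * d 1 + (l + 3 / 2) • 1)
    - (1 / 2 : ℂ) • (x 0 * (x 2 * d 2 + (1 / 2 : ℂ) • 1)) + (I / 2) • (x 1 * (d 2 * d 2))

/-- `ρ_λ(e2)`. -/
def rhoE2 (l : ℂ) : A :=
  x 1 * (x 0 * d 0 + x 1 * d 1 + (l + 3 / 2) • 1)
    + (1 / 2 : ℂ) • (x 1 * (x 2 * d 2 + (1 / 2 : ℂ) • 1)) + (I / 2) • (x 0 * (x 2 * x 2))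

end Operators

namespace IsWeylFamily

attribute [local instance] LieRing.ofAssociativeRing

variable {A : Type*} [Ring A] [Algebra ℂ A] {x d : Fin 3 → A} (h : IsWeylFamily x d)
include h

theorem lie_symplecticDirac_x_zero : ⁅symplecticDirac x d, x 0⁆ = -d 2 := by
  simp [symplecticDirac, lie_mul_left, h.lie_x_x, h.lie_d_x]

theorem lie_symplecticDirac_x_one : ⁅symplecticDirac x d, x 1⁆ = I • x 2 := by
  simp [symplecticDirac, lie_mul_left, h.lie_x_x, h.lie_d_x]

theorem lie_symplecticDirac_x_two : ⁅symplecticDirac x d, x 2⁆ = -d 0 := by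
  simp [symplecticDirac, lie_mul_left, h.lie_d_x]

theorem lie_symplecticDirac_d_zero : ⁅symplecticDirac x d, d 0⁆ = 0 := by
  simp [symplecticDirac, lie_mul_left, h.lie_d_d, h.lie_x_d]

theorem lie_symplecticDirac_d_one : ⁅symplecticDirac x d, d 1⁆ = 0 := by
  simp [symplecticDirac, lie_mul_left, h.lie_d_d, h.lie_x_d]

theorem lie_symplecticDirac_d_two : ⁅symplecticDirac x d, d 2⁆ = -(I • d 1) := by
  simp [symplecticDirac, lie_mul_left, h.lie_d_d, h.lie_x_d]

theorem commute_symplecticDirac_rhoE : Commute (symplecticDirac x d) (rhoE x d) := by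
  rw [commute_iff_lie_eq]
  calc ⁅symplecticDirac x d, rhoE x d⁆
      = -(I • (x 2 * d 0)) + (I / 2) • (d 0 * x 2 + x 2 * d 0) := by
        simp only [rhoE, lie_sub, lie_neg, lie_smul, lie_mul_right, h.lie_symplecticDirac_x_one,
          h.lie_symplecticDirac_x_two, h.lie_symplecticDirac_d_zero, mul_zero, smul_mul_assoc,
          neg_mul, mul_neg]
        module
    _ = 0 := by
        simp only [h.d_mul_x, Fin.reduceEq, if_false]
        module

theorem commute_symplecticDirac_rhoH : Commute (symplecticDirac x d) (rhoH x d) := by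
  rw [commute_iff_lie_eq]
  calc ⁅symplecticDirac x d, rhoH x d⁆
      = d 2 * d 0 + I • (x 2 * d 1) - (d 0 * d 2 + I • (x 2 * d 1)) := by
        simp only [rhoH, lie_add, lie_neg, lie_smul, lie_mul_right, lie_one_right,
          h.lie_symplecticDirac_x_zero, h.lie_symplecticDirac_x_one, h.lie_symplecticDirac_x_two,
          h.lie_symplecticDirac_d_zero, h.lie_symplecticDirac_d_one, h.lie_symplecticDirac_d_two,
          mul_zero, smul_mul_assoc, mul_smul_comm, neg_mul, mul_neg]
        module
    _ = 0 := by
        rw [h.d_mul_comm 0 2, sub_self]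

theorem commute_symplecticDirac_rhoF : Commute (symplecticDirac x d) (rhoF x d) := by
  rw [commute_iff_lie_eq]
  calc ⁅symplecticDirac x d, rhoF x d⁆
      = d 2 * d 1 + (I * I / 2) • (d 1 * d 2 + d 2 * d 1) := by
        simp only [rhoF, lie_sub, lie_neg, lie_smul, lie_mul_right, h.lie_symplecticDirac_x_zero,
          h.lie_symplecticDirac_d_one, h.lie_symplecticDirac_d_two, mul_zero, smul_mul_assoc,
          mul_smul_comm, neg_mul, mul_neg]
        module
    _ = 0 := by
        rw [h.d_mul_comm 1 2, I_mul_I]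
        module

theorem lie_symplecticDirac_shiftedEuler :
    ⁅symplecticDirac x d, shiftedEuler x d⁆ = symplecticDirac x d := by
  calc ⁅symplecticDirac x d, shiftedEuler x d⁆ = -(d 2 * d 0) + I • (x 2 * d 1) := by
        simp [shiftedEuler, lie_mul_right, lie_one_right, h.lie_symplecticDirac_x_zero,
          h.lie_symplecticDirac_x_one, h.lie_symplecticDirac_d_zero, h.lie_symplecticDirac_d_one]
    _ = symplecticDirac x d := by
        rw [symplecticDirac, h.d_mul_comm 2 0]
        module

theorem lie_symplecticDirac_symplecticDiracDual :
    ⁅symplecticDirac x d, symplecticDiracDual x d⁆ = -(I • shiftedEuler x d) := by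
  calc ⁅symplecticDirac x d, symplecticDiracDual x d⁆
      = I • (x 2 * d 2) - I • (x 1 * d 1) - I • (d 2 * x 2 + x 0 * d 0) := by
        simp only [symplecticDiracDual, lie_add, lie_smul, lie_mul_right,
          h.lie_symplecticDirac_x_zero, h.lie_symplecticDirac_x_one, h.lie_symplecticDirac_x_two,
          h.lie_symplecticDirac_d_two, smul_mul_assoc, mul_smul_comm, neg_mul, mul_neg]
        module
    _ = -(I • shiftedEuler x d) := by
        simp only [shiftedEuler, h.d_mul_x, if_true]
        module

theorem d_one_mul_symplecticDiracDual_sub :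
    d 1 * symplecticDiracDual x d - d 2 * shiftedEuler x d = x 0 * symplecticDirac x d := by
  simp only [symplecticDiracDual, shiftedEuler, symplecticDirac, mul_add, mul_sub, mul_one,
    mul_smul_comm, h.d_mul_x, h.d_mul_x_mul, h.d_mul_comm 2, Fin.reduceEq, if_true, if_false,
    one_mul, zero_mul, add_zero]
  module

theorem smul_x_two_mul_shiftedEuler_sub :
    I • (x 2 * shiftedEuler x d) - d 0 * symplecticDiracDual x d = x 1 * symplecticDirac x d := by
  simp only [symplecticDiracDual, shiftedEuler, symplecticDirac, mul_add, mul_sub, mul_one,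
    mul_smul_comm, h.d_mul_x, h.d_mul_x_mul, h.x_left_comm 2, Fin.reduceEq, if_true, if_false,
    one_mul, zero_mul, add_zero]
  module

theorem rhoE1_eq (l : ℂ) : rhoE1 x d l = x 0 * shiftedEuler x d
    + (I / 2) • (d 2 * symplecticDiracDual x d) + (l + 3 / 4) • x 0 := by
  have hX : (I / 2) • (d 2 * symplecticDiracDual x d)
      = (I / 2) • (x 1 * (d 2 * d 2)) - (1 / 2 : ℂ) • (x 0 * (x 2 * d 2) + x 0) := by
    calc (I / 2) • (d 2 * symplecticDiracDual x d)
        = (I / 2) • (x 1 * (d 2 * d 2)) + (I * I / 2) • (x 0 * (x 2 * d 2) + x 0) := by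
          simp only [symplecticDiracDual, mul_add, mul_smul_comm, h.d_mul_x, h.d_mul_x_mul,
            Fin.reduceEq, if_true, if_false, zero_mul, add_zero, mul_one]
          module
      _ = _ := by
          rw [I_mul_I]
          module
  rw [hX]
  simp only [rhoE1, shiftedEuler, mul_add, mul_smul_comm, mul_one]
  module

theorem rhoE2_eq (l : ℂ) : rhoE2 x d l = x 1 * shiftedEuler x d
    + (1 / 2 : ℂ) • (x 2 * symplecticDiracDual x d) + (l + 3 / 4) • x 1 := by
  simp only [rhoE2, symplecticDiracDual, shiftedEuler, mul_add, mul_one, mul_smul_comm,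
    h.x_left_comm 2]
  module

theorem semiconjBy_symplecticDirac_rhoH0 :
    SemiconjBy (symplecticDirac x d) (rhoH0 x d (-3 / 4)) (rhoH0 x d (3 / 4)) := by
  have hρ : rhoH0 x d (3 / 4) = rhoH0 x d (-3 / 4) + (3 / 2 : ℂ) • 1 := by
    simp only [rhoH0]; module
  have hE : rhoH0 x d (-3 / 4) = (3 / 2 : ℂ) • shiftedEuler x d + (-3 / 4 : ℂ) • 1 := by
    simp only [rhoH0, shiftedEuler]; module
  rw [hρ, semiconjBy_add_iff_lie_eq, hE, smul_mul_assoc, one_mul]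
  simp [h.lie_symplecticDirac_shiftedEuler, lie_one_right]

theorem semiconjBy_symplecticDirac_rhoE1 :
    SemiconjBy (symplecticDirac x d) (rhoE1 x d (-3 / 4)) (rhoE1 x d (3 / 4)) := by
  have hρ : rhoE1 x d (3 / 4) = rhoE1 x d (-3 / 4) + (3 / 2 : ℂ) • x 0 := by
    rw [h.rhoE1_eq, h.rhoE1_eq]; module
  rw [hρ, semiconjBy_add_iff_lie_eq]
  calc ⁅symplecticDirac x d, rhoE1 x d (-3 / 4)⁆
      = x 0 * symplecticDirac x d - d 2 * shiftedEuler x d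
          + (-(I * I) / 2) • (d 1 * symplecticDiracDual x d + d 2 * shiftedEuler x d) := by
        simp only [h.rhoE1_eq, lie_add, lie_smul, lie_mul_right, h.lie_symplecticDirac_x_zero,
          h.lie_symplecticDirac_d_two, h.lie_symplecticDirac_shiftedEuler,
          h.lie_symplecticDirac_symplecticDiracDual, smul_mul_assoc, mul_smul_comm, neg_mul,
          mul_neg]
        module
    _ = x 0 * symplecticDirac x d
          + (1 / 2 : ℂ) • (d 1 * symplecticDiracDual x d - d 2 * shiftedEuler x d) := by
        rw [I_mul_I]
        module
    _ = (3 / 2 : ℂ) • x 0 * symplecticDirac x d := by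
        rw [h.d_one_mul_symplecticDiracDual_sub, smul_mul_assoc]
        module

theorem semiconjBy_symplecticDirac_rhoE2 :
    SemiconjBy (symplecticDirac x d) (rhoE2 x d (-3 / 4)) (rhoE2 x d (3 / 4)) := by
  have hρ : rhoE2 x d (3 / 4) = rhoE2 x d (-3 / 4) + (3 / 2 : ℂ) • x 1 := by
    rw [h.rhoE2_eq, h.rhoE2_eq]; module
  rw [hρ, semiconjBy_add_iff_lie_eq]
  calc ⁅symplecticDirac x d, rhoE2 x d (-3 / 4)⁆
      = x 1 * symplecticDirac x d
          + (1 / 2 : ℂ) • (I • (x 2 * shiftedEuler x d) - d 0 * symplecticDiracDual x d) := by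
        simp only [h.rhoE2_eq, lie_add, lie_smul, lie_mul_right, h.lie_symplecticDirac_x_one,
          h.lie_symplecticDirac_x_two, h.lie_symplecticDirac_shiftedEuler,
          h.lie_symplecticDirac_symplecticDiracDual, smul_mul_assoc, mul_smul_comm, neg_mul,
          mul_neg]
        module
    _ = (3 / 2 : ℂ) • x 1 * symplecticDirac x d := by
        rw [h.smul_x_two_mul_shiftedEuler_sub, smul_mul_assoc]
        module

end IsWeylFamily

theorem Ds_intertwines_general {A : Type*} [Ring A] [Algebra ℂ A] {x d : Fin 3 → A}
    (h : IsWeylFamily x d) :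
    Commute (symplecticDirac x d) (-d 0) ∧
    Commute (symplecticDirac x d) (-d 1) ∧
    Commute (symplecticDirac x d) (rhoE x d) ∧
    Commute (symplecticDirac x d) (rhoH x d) ∧
    Commute (symplecticDirac x d) (rhoF x d) ∧
    SemiconjBy (symplecticDirac x d) (rhoH0 x d (-3 / 4)) (rhoH0 x d (3 / 4)) ∧
    SemiconjBy (symplecticDirac x d) (rhoE1 x d (-3 / 4)) (rhoE1 x d (3 / 4)) ∧
    SemiconjBy (symplecticDirac x d) (rhoE2 x d (-3 / 4)) (rhoE2 x d (3 / 4)) :=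
  ⟨(commute_iff_lie_eq.mpr h.lie_symplecticDirac_d_zero).neg_right,
    (commute_iff_lie_eq.mpr h.lie_symplecticDirac_d_one).neg_right,
    h.commute_symplecticDirac_rhoE, h.commute_symplecticDirac_rhoH,
    h.commute_symplecticDirac_rhoF, h.semiconjBy_symplecticDirac_rhoH0,
    h.semiconjBy_symplecticDirac_rhoE1, h.semiconjBy_symplecticDirac_rhoE2⟩

/-- The symplectic Dirac operator `D_s = iq∂_y - ∂_x∂_q` intertwines `ρ_{-3/4}` and
`ρ_{3/4}` on each of the eight basis elements `f1, f2, e, h, f, h0, e1, e2`, where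
`ρ_λ(f1) = -∂_x`, `ρ_λ(f2) = -∂_y`, `ρ_λ(e) = -y∂_x - (i/2)q²`,
`ρ_λ(h) = -x∂_x + y∂_y + q∂_q + 1/2`, `ρ_λ(f) = -x∂_y - (i/2)∂_q²`. -/
theorem Ds_intertwines :
    Ds * (-Dx) = (-Dx) * Ds ∧
    Ds * (-Dy) = (-Dy) * Ds ∧
    Ds * (-(My * Dx) - (I / 2) • (Mq * Mq)) = (-(My * Dx) - (I / 2) • (Mq * Mq)) * Ds ∧
    Ds * (-(Mx * Dx) + My * Dy + Mq * Dq + (1 / 2 : ℂ) • 1)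
      = (-(Mx * Dx) + My * Dy + Mq * Dq + (1 / 2 : ℂ) • 1) * Ds ∧
    Ds * (-(Mx * Dy) - (I / 2) • (Dq * Dq)) = (-(Mx * Dy) - (I / 2) • (Dq * Dq)) * Ds ∧
    Ds * rho_h0 (-3 / 4) = rho_h0 (3 / 4) * Ds ∧
    Ds * rho_e1 (-3 / 4) = rho_e1 (3 / 4) * Ds ∧
    Ds * rho_e2 (-3 / 4) = rho_e2 (3 / 4) * Ds := by
  have h := Ds_intertwines_general (isWeylFamily_mvPolynomial ℂ (Fin 3))
  exact h
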